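/- For every integer n > 1, there exists a DWA over {a, b, i} with at most 3n + 2 states, all of whose weights belong to {−1, 0, 1}, that realizes O_n. -/

import Mathlib

/-- A deterministic weighted automaton (DWA) over alphabet `A` with state space `Q`. -/
structure DWA (A : Type) (Q : Type) where
  init : Q
  δ : Q → A → Q
  c : Q → A → ℤ

/-- The extended transition function `δ̂`. -/
def DWA.run {A Q : Type} (M : DWA A Q) (q : Q) (w : List A) : Q :=
  w.foldl M.δ q

/-- The accumulated weight of the run on `w` starting in state `q`. -/
def DWA.valFrom {A Q : Type} (M : DWA A Q) : Q → List A → ℤ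
  | _, [] => 0
  | q, x :: w => M.c q x + M.valFrom (M.δ q x) w

/-- The value `A(w)` of a word: the sum of the weights along the run from the initial state. -/
def DWA.val {A Q : Type} (M : DWA A Q) (w : List A) : ℤ :=
  M.valFrom M.init w

/-- The three-letter alphabet `{a, b, i}`. -/
inductive ABI where
  | a : ABI
  | b : ABI
  | i : ABI
deriving DecidableEq

open Classical in
/-- The observation function `O_n` on nonempty words over `{a, b, i}`:
`O_n(w) = 1` if `w` consists only of `i`'s, or `i^{n+1}` is a prefix of `w`, or
`i^k·a·b^{n-k}` or `i^k·b·a^{n-k}` is a prefix of `w` for some `k < n`; otherwise `O_n(w) = 2`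
if the first letter of `w` different from `i` is `a`, and `O_n(w) = 0` if it is `b`. -/
noncomputable def Obs (n : ℕ) (w : List ABI) : ℕ :=
  if (∀ x ∈ w, x = ABI.i) ∨
      (List.replicate (n + 1) ABI.i <+: w) ∨
      (∃ k < n, List.replicate k ABI.i ++ [ABI.a] ++ List.replicate (n - k) ABI.b <+: w) ∨
      (∃ k < n, List.replicate k ABI.i ++ [ABI.b] ++ List.replicate (n - k) ABI.a <+: w)
  then 1
  else if ∃ k, List.replicate k ABI.i ++ [ABI.a] <+: w then 2
  else 0

/-- A DWA `M` over `{a, b, i}` realizes `O_n` if, for every nonempty word `w`,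
`M(w) < 0 ↔ O_n(w) = 0`, `M(w) = 0 ↔ O_n(w) = 1`, and `M(w) > 0 ↔ O_n(w) = 2`. -/
def Realizes {Q : Type} (n : ℕ) (M : DWA ABI Q) : Prop :=
  ∀ w : List ABI, w ≠ [] →
    (M.val w < 0 ↔ Obs n w = 0) ∧ (M.val w = 0 ↔ Obs n w = 1) ∧ (0 < M.val w ↔ Obs n w = 2)

/-!
The automaton counts down from `n` while it reads leading `i`s. A letter `a` or `b` read with
`j` left on the counter is worth `1` or `-1`, and the automaton then spends the remaining `j`
steps checking whether the next `j` letters are all the opposite one; the last of them cancels the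
weight. Any deviation, and exhaustion of a counter, leads to an absorbing state of weight `0`.

Since `O_{n+1}(i w) = O_n(w)`, an induction on the word shows that the value of a word read with
`j` left on the counter is exactly `O_j - 1`.
-/

namespace DWA

variable {A Q Q' : Type}

/-- The automaton `M` with its states renamed along the equivalence `e`. -/
def reindex (M : DWA A Q) (e : Q ≃ Q') : DWA A Q' where
  init := e M.init
  δ q x := e (M.δ (e.symm q) x)
  c q x := M.c (e.symm q) x

theorem valFrom_reindex (M : DWA A Q) (e : Q ≃ Q') (q : Q') (w : List A) :
    (M.reindex e).valFrom q w = M.valFrom (e.symm q) w := by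
  induction w generalizing q with
  | nil => rfl
  | cons x w ih => rw [valFrom, valFrom, ih, reindex, e.symm_apply_apply]

theorem val_reindex (M : DWA A Q) (e : Q ≃ Q') (w : List A) : (M.reindex e).val w = M.val w := by
  rw [val, valFrom_reindex, reindex, e.symm_apply_apply, val]

theorem valFrom_eq_zero_of_absorbing (M : DWA A Q) {q : Q} (hδ : ∀ x, M.δ q x = q)
    (hc : ∀ x, M.c q x = 0) (w : List A) : M.valFrom q w = 0 := by
  induction w with
  | nil => rfl
  | cons x w ih => simp [valFrom, hδ, hc, ih]

end DWA

theorem Realizes.reindex {Q Q' : Type} {n : ℕ} {M : DWA ABI Q} (h : Realizes n M) (e : Q ≃ Q') :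
    Realizes n (M.reindex e) := by
  simpa only [Realizes, DWA.val_reindex] using h

theorem obs_le_two (n : ℕ) (w : List ABI) : Obs n w ≤ 2 := by
  rw [Obs]
  split_ifs <;> decide

theorem realizes_of_val_eq_obs_sub_one {Q : Type} {n : ℕ} {M : DWA ABI Q}
    (h : ∀ w, M.val w = Obs n w - 1) : Realizes n M := by
  intro w _
  have hw := h w
  have := obs_le_two n w
  omega

namespace ABI

/-- The letters other than `i`, indexed so that Boolean negation exchanges `a` and `b`. -/
def ofBool : Bool → ABI
  | true => a
  | false => b

/-- The weight of the first letter other than `i`, with letters indexed as in `ABI.ofBool`. -/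
def sign : Bool → ℤ
  | true => 1
  | false => -1

theorem sign_not (s : Bool) : sign (!s) = -sign s := by
  cases s <;> rfl

theorem eq_i_or_eq_ofBool (x : ABI) : x = i ∨ ∃ s, x = ofBool s := by
  cases x
  exacts [.inr ⟨true, rfl⟩, .inr ⟨false, rfl⟩, .inl rfl]

end ABI

section Prefix

variable {α : Type*} {u x z : α} (y : α) (n : ℕ) (w : List α)

theorem exists_replicate_append_prefix_cons_self_iff (hx : x ≠ z) :
    (∃ k, List.replicate k z ++ [x] <+: z :: w) ↔ ∃ k, List.replicate k z ++ [x] <+: w := by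
  rw [← Nat.or_exists_add_one]
  simp [List.replicate_succ, hx]

theorem exists_lt_replicate_append_prefix_cons_self_iff (hx : x ≠ z) :
    (∃ k < n + 1, List.replicate k z ++ [x] ++ List.replicate (n + 1 - k) y <+: z :: w) ↔
      ∃ k < n, List.replicate k z ++ [x] ++ List.replicate (n - k) y <+: w := by
  rw [Nat.exists_lt_succ_left]
  simp [List.replicate_succ, hx]

theorem exists_replicate_append_prefix_cons_iff (hu : u ≠ z) :
    (∃ k, List.replicate k z ++ [x] <+: u :: w) ↔ x = u := by
  rw [← Nat.or_exists_add_one]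
  simp [List.replicate_succ, hu.symm]

theorem exists_lt_replicate_append_prefix_cons_iff (hu : u ≠ z) :
    (∃ k < n, List.replicate k z ++ [x] ++ List.replicate (n - k) y <+: u :: w) ↔
      0 < n ∧ x = u ∧ List.replicate n y <+: w := by
  cases n with
  | zero => simp
  | succ n =>
    rw [Nat.exists_lt_succ_left]
    simp [List.replicate_succ, hu.symm]

end Prefix

section Obs

variable (n : ℕ) (s : Bool) (w : List ABI)

theorem obs_nil : Obs n [] = 1 := by
  simp [Obs]

theorem obs_zero_i_cons : Obs 0 (ABI.i :: w) = 1 := by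
  simp [Obs]

theorem obs_succ_i_cons : Obs (n + 1) (ABI.i :: w) = Obs n w := by
  have ha : ABI.a ≠ ABI.i := by decide
  have hb : ABI.b ≠ ABI.i := by decide
  have all_i : (∀ x ∈ ABI.i :: w, x = ABI.i) ↔ ∀ x ∈ w, x = ABI.i := by simp
  have i_pow : List.replicate (n + 1 + 1) ABI.i <+: ABI.i :: w ↔
      List.replicate (n + 1) ABI.i <+: w := by
    simp [List.replicate_succ]
  simp only [Obs, all_i, i_pow, exists_lt_replicate_append_prefix_cons_self_iff _ _ _ ha,
    exists_lt_replicate_append_prefix_cons_self_iff _ _ _ hb]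
  rw [exists_replicate_append_prefix_cons_self_iff _ ha]

theorem obs_ofBool_cons :
    (Obs n (ABI.ofBool s :: w) : ℤ) - 1 =
      if 0 < n ∧ List.replicate n (ABI.ofBool !s) <+: w then 0 else ABI.sign s := by
  have hs : ABI.ofBool s ≠ ABI.i := by cases s <;> decide
  have not_all_i : ¬ ∀ x ∈ ABI.ofBool s :: w, x = ABI.i := by simp [hs]
  have not_i_pow : ¬ List.replicate (n + 1) ABI.i <+: ABI.ofBool s :: w := by
    simp [List.replicate_succ, hs.symm]
  simp only [Obs, not_all_i, not_i_pow, false_or,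
    exists_lt_replicate_append_prefix_cons_iff _ _ _ hs]
  rw [exists_replicate_append_prefix_cons_iff _ hs]
  cases s <;> grind [ABI.ofBool, ABI.sign]

end Obs

/-- The states of the automaton realizing `O_n`. In `lead j` only `i`s have been read and `j` more
are tolerated; in `await s j` the next `j + 1` letters, all equal to `ABI.ofBool s`, would cancel
the weight collected so far; in `sink` the value is settled. -/
inductive CountdownState (n : ℕ) where
  | lead (j : Fin (n + 1))
  | await (s : Bool) (j : Fin n)
  | sink
deriving Fintype

/-- `CountdownState n` as a disjoint union, by constructor; used to count the states. -/
def CountdownState.equivSum (n : ℕ) :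
    CountdownState n ≃ Fin (n + 1) ⊕ (Bool × Fin n) ⊕ Unit where
  toFun
    | .lead j => .inl j
    | .await s j => .inr (.inl (s, j))
    | .sink => .inr (.inr ())
  invFun
    | .inl j => .lead j
    | .inr (.inl (s, j)) => .await s j
    | .inr (.inr ()) => .sink
  left_inv q := by cases q <;> rfl
  right_inv q := by rcases q with _ | _ | _ <;> rfl

theorem CountdownState.card (n : ℕ) : Fintype.card (CountdownState n) = 3 * n + 2 := by
  calc Fintype.card (CountdownState n)
      = (n + 1) + (2 * n + 1) := by simp [Fintype.card_congr (equivSum n)]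
    _ = 3 * n + 2 := by ring

/-- The automaton with states `CountdownState n` that realizes `O_n`. -/
def countdown (n : ℕ) : DWA ABI (CountdownState n) where
  init := .lead (Fin.last n)
  δ
    | .lead ⟨j + 1, h⟩, .i => .lead ⟨j, by omega⟩
    | .lead ⟨j + 1, h⟩, .a => .await false ⟨j, by omega⟩
    | .lead ⟨j + 1, h⟩, .b => .await true ⟨j, by omega⟩
    | .await s ⟨j + 1, h⟩, x => if x = ABI.ofBool s then .await s ⟨j, by omega⟩ else .sink
    | _, _ => .sink
  c
    | .lead _, .a => 1
    | .lead _, .b => -1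
    | .await s ⟨0, _⟩, x => if x = ABI.ofBool s then ABI.sign s else 0
    | _, _ => 0

namespace countdown

variable {n : ℕ}

theorem c_eq_neg_one_or_zero_or_one (q : CountdownState n) (x : ABI) :
    (countdown n).c q x = -1 ∨ (countdown n).c q x = 0 ∨ (countdown n).c q x = 1 := by
  rcases q with j | ⟨s, _ | j, hj⟩ | _
  · cases x <;> simp [countdown]
  · cases s <;> simp only [countdown, ABI.sign] <;> split_ifs <;> simp
  all_goals simp [countdown]

theorem δ_lead_succ_ofBool {j : ℕ} (hj : j + 1 < n + 1) (s : Bool) :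
    (countdown n).δ (.lead ⟨j + 1, hj⟩) (ABI.ofBool s) = .await (!s) ⟨j, by omega⟩ := by
  cases s <;> rfl

theorem c_lead_ofBool (j : Fin (n + 1)) (s : Bool) :
    (countdown n).c (.lead j) (ABI.ofBool s) = ABI.sign s := by
  cases s <;> rfl

theorem valFrom_sink (w : List ABI) : (countdown n).valFrom .sink w = 0 :=
  (countdown n).valFrom_eq_zero_of_absorbing (fun _ => rfl) (fun _ => rfl) w

theorem δ_await_of_ne {s : Bool} {x : ABI} (hx : x ≠ ABI.ofBool s) (j : Fin n) :
    (countdown n).δ (.await s j) x = .sink := by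
  obtain ⟨_ | j, hj⟩ := j
  · rfl
  · exact if_neg hx

theorem c_await_of_ne {s : Bool} {x : ABI} (hx : x ≠ ABI.ofBool s) (j : Fin n) :
    (countdown n).c (.await s j) x = 0 := by
  obtain ⟨_ | j, hj⟩ := j
  · exact if_neg hx
  · rfl

theorem valFrom_await (s : Bool) {j : ℕ} (hj : j < n) (w : List ABI) :
    (countdown n).valFrom (.await s ⟨j, hj⟩) w =
      if List.replicate (j + 1) (ABI.ofBool s) <+: w then ABI.sign s else 0 := by
  induction w generalizing j with
  | nil => simp [DWA.valFrom, List.replicate_succ]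
  | cons x w ih =>
    rw [DWA.valFrom]
    by_cases hx : x = ABI.ofBool s
    · subst hx
      cases j with
      | zero =>
        have hc : (countdown n).c (.await s ⟨0, hj⟩) (ABI.ofBool s) = ABI.sign s := if_pos rfl
        have hδ : (countdown n).δ (.await s ⟨0, hj⟩) (ABI.ofBool s) = .sink := rfl
        simp [hc, hδ, valFrom_sink]
      | succ j =>
        have hc : (countdown n).c (.await s ⟨j + 1, hj⟩) (ABI.ofBool s) = 0 := rfl
        have hδ : (countdown n).δ (.await s ⟨j + 1, hj⟩) (ABI.ofBool s) =
            .await s ⟨j, by omega⟩ := if_pos rfl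
        simp [hc, hδ, ih, List.replicate_succ]
    · simp [c_await_of_ne hx, δ_await_of_ne hx, valFrom_sink, List.replicate_succ, Ne.symm hx]

theorem valFrom_lead {j : ℕ} (hj : j < n + 1) (w : List ABI) :
    (countdown n).valFrom (.lead ⟨j, hj⟩) w = Obs j w - 1 := by
  induction w generalizing j with
  | nil => simp [DWA.valFrom, obs_nil]
  | cons x w ih =>
    rw [DWA.valFrom]
    obtain rfl | ⟨s, rfl⟩ := x.eq_i_or_eq_ofBool
    · have hc : (countdown n).c (.lead ⟨j, hj⟩) .i = 0 := rfl
      cases j with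
      | zero =>
        have hδ : (countdown n).δ (.lead ⟨0, hj⟩) .i = .sink := rfl
        rw [hc, hδ, valFrom_sink, obs_zero_i_cons]
        rfl
      | succ j =>
        have hδ : (countdown n).δ (.lead ⟨j + 1, hj⟩) .i = .lead ⟨j, by omega⟩ := rfl
        rw [hc, hδ, ih, obs_succ_i_cons, zero_add]
    · rw [c_lead_ofBool, obs_ofBool_cons]
      cases j with
      | zero =>
        have hδ : (countdown n).δ (.lead ⟨0, hj⟩) (ABI.ofBool s) = .sink := rfl
        rw [hδ, valFrom_sink]
        simp
      | succ j =>
        rw [δ_lead_succ_ofBool, valFrom_await, ABI.sign_not]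
        simp only [j.succ_pos, true_and]
        split_ifs <;> ring

theorem realizes : Realizes n (countdown n) :=
  realizes_of_val_eq_obs_sub_one fun w => valFrom_lead n.lt_succ_self w

end countdown

/-- for every `n > 1` there is a DWA over `{a, b, i}` with at most `3n + 2`
states, all of whose weights belong to `{-1, 0, 1}`, realizing `O_n`. -/
theorem exists_small_weight_dwa_realizing (n : ℕ) (hn : 1 < n) :
    ∃ (m : ℕ) (M : DWA ABI (Fin m)),
      m ≤ 3 * n + 2 ∧
      (∀ q x, M.c q x = -1 ∨ M.c q x = 0 ∨ M.c q x = 1) ∧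
      Realizes n M := by
  let e := Fintype.equivFin (CountdownState n)
  refine ⟨Fintype.card (CountdownState n), (countdown n).reindex e, ?_, ?_, ?_⟩
  · exact (CountdownState.card n).le
  · exact fun q x => countdown.c_eq_neg_one_or_zero_or_one (e.symm q) x
  · exact countdown.realizes.reindex e
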